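/- For every complex number q with |q| < 1, the square of the cubic theta function c(q) = 3 (q^3; q^3)_∞^3 / (q; q)_∞ satisfies the 2-dissection c(q)^2 = ( q^2 c(q^4)^2 + 9 (q^4; q^4)_∞^6 (q^6; q^6)_∞^4 / ((q^2; q^2)_∞^4 (q^{12}; q^{12})_∞^2) ) + 6 q c(q^4) (q^4; q^4)_∞^3 (q^6; q^6)_∞^2 / ((q^2; q^2)_∞^2 (q^{12}; q^{12})_∞). -/

import Mathlib

/-- The q-shifted factorial `(a; q)_∞ = ∏_{n=0}^∞ (1 - a qⁿ)`. -/
noncomputable def qPoch (a q : ℂ) : ℂ := ∏' n : ℕ, (1 - a * q ^ n)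

/-- The cubic theta function `c(q) = 3 (q³; q³)_∞³ / (q; q)_∞`. -/
noncomputable def c (q : ℂ) : ℂ := 3 * qPoch (q ^ 3) (q ^ 3) ^ 3 / qPoch q q

/-!
With `θ(x; p) = (x; p)_∞ (p/x; p)_∞`, every infinite product in the theorem is a product of values
`θ(q^k; q^12)` and of powers of `(q^6; q^6)_∞` and `(q^12; q^12)_∞`, and the 2-dissection of `c(q)`
itself, whose square is the theorem, becomes a three-term relation between the `θ(q^k; q^12)`. That
relation is the case `p = q^12`, `(x, y, u, v) = (q^4, q^2, q^3, 1)` of Weierstrass' addition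
formula.

By the Jacobi triple product, `θ` is proportional to the theta series
`Θ(x) = ∑ (-1)ⁿ p^(n(n-1)/2) xⁿ`. Splitting the double series `Θ(xy) Θ(x/y)` by the parity of the
sum of the two indices decouples the exponents and gives
`Θ(xy) Θ(x/y) = A(x) B(y) - (x/y) B(x) A(y)`, so that Weierstrass' formula is the Plücker relation
for the vectors `(A, B)` at `x`, `y`, `u`, `v`.
-/

open Filter Finset Topology

lemma norm_pow_lt_one {𝕜 : Type*} [NormedDivisionRing 𝕜] {q : 𝕜} (hq : ‖q‖ < 1) {n : ℕ}
    (hn : n ≠ 0) : ‖q ^ n‖ < 1 := by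
  rw [norm_pow]
  exact pow_lt_one₀ (norm_nonneg _) hq hn

section QPochhammer

variable {a q : ℂ}

/-- The finite q-shifted factorial `(a; q)_n`, whose limit as `n → ∞` is `qPoch a q`. -/
noncomputable def finiteQPoch (a q : ℂ) (n : ℕ) : ℂ := ∏ k ∈ range n, (1 - a * q ^ k)

lemma finiteQPoch_succ (a q : ℂ) (n : ℕ) :
    finiteQPoch a q (n + 1) = finiteQPoch a q n * (1 - a * q ^ n) :=
  prod_range_succ _ _

lemma summable_norm_neg_mul_pow (a : ℂ) (hq : ‖q‖ < 1) :
    Summable fun n : ℕ => ‖-(a * q ^ n)‖ := by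
  simp only [norm_neg, norm_mul, norm_pow]
  exact (summable_geometric_of_lt_one (norm_nonneg _) hq).mul_left _

lemma tendsto_finiteQPoch (a : ℂ) (hq : ‖q‖ < 1) :
    Tendsto (finiteQPoch a q) atTop (𝓝 (qPoch a q)) := by
  have hprod := (multipliable_one_add_of_summable (summable_norm_neg_mul_pow a hq)).hasProd
  simp only [← sub_eq_add_neg] at hprod
  exact hprod.tendsto_prod_nat

lemma one_sub_mul_pow_ne_zero (ha : ‖a‖ < 1) (hq : ‖q‖ < 1) (n : ℕ) : 1 - a * q ^ n ≠ 0 := by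
  intro h
  have hlt : ‖a * q ^ n‖ < 1 := by
    rw [norm_mul, norm_pow]
    exact mul_lt_one_of_nonneg_of_lt_one_left (norm_nonneg _) ha
      (pow_le_one₀ (norm_nonneg _) hq.le)
  rw [← sub_eq_zero.mp h, norm_one] at hlt
  exact hlt.false

lemma qPoch_ne_zero (ha : ‖a‖ < 1) (hq : ‖q‖ < 1) : qPoch a q ≠ 0 := by
  simpa [qPoch, sub_eq_add_neg] using
    tprod_one_add_ne_zero_of_summable (f := fun n : ℕ => -(a * q ^ n))
      (fun n => by simpa [sub_eq_add_neg] using one_sub_mul_pow_ne_zero ha hq n)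
      (summable_norm_neg_mul_pow a hq)

lemma finiteQPoch_mul_eq_prod (a q : ℂ) (m N : ℕ) :
    finiteQPoch a q (m * N) = ∏ i ∈ range m, finiteQPoch (a * q ^ i) (q ^ m) N := by
  simp only [finiteQPoch]
  rw [Finset.prod_comm]
  induction N with
  | zero => simp
  | succ N ih =>
    rw [prod_range_succ, ← ih, mul_add_one, prod_range_add]
    congr! 3 with i
    ring

lemma qPoch_eq_prod (a : ℂ) (hq : ‖q‖ < 1) {m : ℕ} (hm : m ≠ 0) :
    qPoch a q = ∏ i ∈ range m, qPoch (a * q ^ i) (q ^ m) := by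
  have hsub : Tendsto (fun N => finiteQPoch a q (m * N)) atTop (𝓝 (qPoch a q)) :=
    (tendsto_finiteQPoch a hq).comp (tendsto_id.const_mul_atTop' (Nat.pos_of_ne_zero hm))
  simp only [finiteQPoch_mul_eq_prod] at hsub
  exact tendsto_nhds_unique hsub
    (tendsto_finsetProd _ fun i _ => tendsto_finiteQPoch _ (norm_pow_lt_one hq hm))

end QPochhammer

section GaussBinom

variable {p : ℂ}

/-- The reciprocal `1 / (p; p)_k`, extended by `0` to negative `k` so that the recurrence
`invQFactorial_sub_one` holds on all of `ℤ`. -/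
noncomputable def invQFactorial (p : ℂ) : ℤ → ℂ
  | .ofNat n => (finiteQPoch p p n)⁻¹
  | .negSucc _ => 0

lemma invQFactorial_natCast (p : ℂ) (n : ℕ) : invQFactorial p n = (finiteQPoch p p n)⁻¹ := rfl

lemma invQFactorial_of_neg (p : ℂ) {k : ℤ} (hk : k < 0) : invQFactorial p k = 0 := by
  obtain ⟨n, rfl⟩ := Int.eq_negSucc_of_lt_zero hk
  rfl

lemma invQFactorial_sub_one (hp : ‖p‖ < 1) (k : ℤ) :
    invQFactorial p (k - 1) = (1 - p ^ k) * invQFactorial p k := by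
  rcases lt_trichotomy k 0 with hk | rfl | hk
  · rw [invQFactorial_of_neg p hk, invQFactorial_of_neg p (by lia), mul_zero]
  · rw [invQFactorial_of_neg p (by lia), zpow_zero, sub_self, zero_mul]
  · obtain ⟨n, rfl⟩ := Int.eq_succ_of_zero_lt hk
    have hn := one_sub_mul_pow_ne_zero hp hp n
    rw [add_sub_cancel_right, ← Nat.cast_succ, invQFactorial_natCast,
      invQFactorial_natCast, finiteQPoch_succ, zpow_natCast, pow_succ', mul_inv_rev,
      mul_inv_cancel_left₀ hn]

lemma tendsto_invQFactorial (hp : ‖p‖ < 1) :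
    Tendsto (invQFactorial p) atTop (𝓝 (qPoch p p)⁻¹) := by
  rw [← Nat.map_cast_int_atTop, tendsto_map'_iff]
  exact (tendsto_finiteQPoch p hp).inv₀ (qPoch_ne_zero hp hp)

lemma exists_norm_invQFactorial_le (hp : ‖p‖ < 1) : ∃ K, ∀ k, ‖invQFactorial p k‖ ≤ K := by
  obtain ⟨K, hK⟩ :=
    ((tendsto_finiteQPoch p hp).inv₀ (qPoch_ne_zero hp hp)).norm.bddAbove_range
  have hnat (n : ℕ) : ‖(finiteQPoch p p n)⁻¹‖ ≤ K := hK ⟨n, rfl⟩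
  refine ⟨K, fun k => ?_⟩
  rcases k with n | _
  · exact hnat n
  · exact norm_zero.trans_le ((norm_nonneg _).trans (hnat 0))

/-- The Gaussian binomial coefficient `[N choose k]_p = (p; p)_N / ((p; p)_k (p; p)_{N-k})`,
which vanishes for `k < 0` and for `k > N`. -/
noncomputable def gaussBinom (p : ℂ) (N : ℕ) (k : ℤ) : ℂ :=
  finiteQPoch p p N * invQFactorial p k * invQFactorial p (N - k)

lemma gaussBinom_symm (p : ℂ) (N : ℕ) (k : ℤ) : gaussBinom p N (N - k) = gaussBinom p N k := by
  rw [gaussBinom, gaussBinom, sub_sub_cancel, mul_right_comm]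

lemma gaussBinom_zero (p : ℂ) (k : ℤ) : gaussBinom p 0 k = if k = 0 then 1 else 0 := by
  split_ifs with hk
  · subst hk
    have hone : invQFactorial p 0 = 1 := by
      simpa [finiteQPoch] using invQFactorial_natCast p 0
    simp [gaussBinom, finiteQPoch, hone]
  · rcases lt_or_gt_of_ne hk with hk | hk
    · simp [gaussBinom, invQFactorial_of_neg p hk]
    · simp [gaussBinom, invQFactorial_of_neg p (neg_neg_of_pos hk)]

lemma gaussBinom_succ (hp : ‖p‖ < 1) (hp0 : p ≠ 0) (N : ℕ) (k : ℤ) :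
    gaussBinom p (N + 1) k = gaussBinom p N k + p ^ (N + 1 - k) * gaussBinom p N (k - 1) := by
  have hk := invQFactorial_sub_one hp k
  have hNk := invQFactorial_sub_one hp (N + 1 - k)
  have hpow : p * p ^ N = p ^ (N + 1 - k) * p ^ k := by
    rw [← zpow_add₀ hp0, sub_add_cancel, ← pow_succ', ← zpow_natCast, Nat.cast_succ]
  rw [show (N + 1 - k - 1 : ℤ) = N - k by ring] at hNk
  rw [gaussBinom, gaussBinom, gaussBinom, finiteQPoch_succ, hpow, hk,
    show (N - (k - 1) : ℤ) = N + 1 - k by ring, hNk, Nat.cast_succ]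
  ring

lemma tendsto_gaussBinom_add_self (hp : ‖p‖ < 1) (j : ℤ) :
    Tendsto (fun n : ℕ => gaussBinom p (n + n) (n + j)) atTop (𝓝 (qPoch p p)⁻¹) := by
  have hnum := (tendsto_finiteQPoch p hp).comp (tendsto_id.atTop_add_atTop tendsto_id)
  have hcast : Tendsto (fun n : ℕ => (n : ℤ)) atTop atTop := tendsto_natCast_atTop_atTop
  have hadd := (tendsto_invQFactorial hp).comp (tendsto_atTop_add_const_right _ j hcast)
  have hsub := (tendsto_invQFactorial hp).comp (tendsto_atTop_add_const_right _ (-j) hcast)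
  have hlim := (hnum.mul hadd).mul hsub
  rw [mul_inv_cancel₀ (qPoch_ne_zero hp hp), one_mul] at hlim
  refine hlim.congr fun n => ?_
  simp only [gaussBinom, Function.comp_apply, id_eq]
  congr 2
  push_cast
  ring

lemma exists_norm_gaussBinom_le (hp : ‖p‖ < 1) : ∃ C, ∀ N k, ‖gaussBinom p N k‖ ≤ C := by
  obtain ⟨K, hK⟩ := exists_norm_invQFactorial_le hp
  obtain ⟨M, hM⟩ := (tendsto_finiteQPoch p hp).norm.bddAbove_range
  have hK0 : 0 ≤ K := (norm_nonneg _).trans (hK 0)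
  have hM (N : ℕ) : ‖finiteQPoch p p N‖ ≤ M := hM ⟨N, rfl⟩
  have hM0 : 0 ≤ M := (norm_nonneg _).trans (hM 0)
  refine ⟨M * K * K, fun N k => ?_⟩
  rw [gaussBinom, norm_mul, norm_mul]
  gcongr
  exacts [hM N, hK k, hK _]

end GaussBinom

section Theta

variable {p x y u v : ℂ}

/-- The `n`-th term of the theta series `∑ (-1)ⁿ p^(n(n-1)/2) xⁿ` over `n : ℤ`. The integer
division is exact. -/
noncomputable def thetaTerm (p x : ℂ) (n : ℤ) : ℂ := p ^ (n * (n - 1) / 2) * (-x) ^ n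

/-- The theta series `Θ(x) = ∑ (-1)ⁿ p^(n(n-1)/2) xⁿ` over `n : ℤ`, the series side of the Jacobi
triple product. -/
noncomputable def thetaSeries (p x : ℂ) : ℂ := ∑' n : ℤ, thetaTerm p x n

/-- The modified Jacobi theta function `θ(x; p) = (x; p)_∞ (p/x; p)_∞`, the factor of the triple
product that depends on `x`; the nome comes first, as in `thetaSeries`. -/
noncomputable def modTheta (p x : ℂ) : ℂ := qPoch x p * qPoch (p / x) p

lemma two_mul_triangle (n : ℤ) : 2 * (n * (n - 1) / 2) = n * (n - 1) :=
  Int.mul_ediv_cancel' (Int.even_mul_pred_self n).two_dvd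

lemma thetaTerm_zero (p x : ℂ) : thetaTerm p x 0 = 1 := by simp [thetaTerm]

lemma thetaTerm_add_one (hp0 : p ≠ 0) (hx : x ≠ 0) (n : ℤ) :
    thetaTerm p x (n + 1) = -x * p ^ n * thetaTerm p x n := by
  have hexp : (n + 1) * (n + 1 - 1) / 2 = n + n * (n - 1) / 2 := by
    linarith [two_mul_triangle n, two_mul_triangle (n + 1)]
  rw [thetaTerm, thetaTerm, hexp, zpow_add₀ hp0, zpow_add_one₀ (neg_ne_zero.mpr hx)]
  ring

lemma thetaTerm_neg (hp0 : p ≠ 0) (x : ℂ) (n : ℤ) :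
    thetaTerm p x (-n) = thetaTerm p (p / x) n := by
  have hexp : -n * (-n - 1) / 2 = n * (n - 1) / 2 + n := by
    linarith [two_mul_triangle n, two_mul_triangle (-n)]
  rw [thetaTerm, thetaTerm, hexp, zpow_add₀ hp0, zpow_neg, ← inv_zpow, mul_assoc, ← mul_zpow]
  congr 2
  field

lemma thetaTerm_sq_neg_sq (p x : ℂ) (n : ℤ) :
    thetaTerm (p ^ 2) (-x ^ 2) n = p ^ (n * (n - 1)) * x ^ (2 * n) := by
  rw [thetaTerm, neg_neg, ← zpow_ofNat p, ← zpow_ofNat x, ← zpow_mul, ← zpow_mul, two_mul_triangle]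

lemma thetaTerm_sq_neg_mul_sq (hp0 : p ≠ 0) (x : ℂ) (n : ℤ) :
    thetaTerm (p ^ 2) (-(p * x ^ 2)) n = p ^ (n * n) * x ^ (2 * n) := by
  rw [thetaTerm, neg_neg, mul_zpow, ← mul_assoc, ← zpow_ofNat, ← zpow_mul, two_mul_triangle,
    ← zpow_add₀ hp0, ← zpow_ofNat, ← zpow_mul]
  congr 2
  ring

lemma thetaTerm_mul_thetaTerm (hp0 : p ≠ 0) (hx : x ≠ 0) (hy : y ≠ 0) (m n : ℤ) :
    thetaTerm p (x * y) m * thetaTerm p (x / y) n =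
      p ^ (m * (m - 1) / 2 + n * (n - 1) / 2) * ((-x) ^ (m + n) * y ^ (m - n)) := by
  rw [thetaTerm, thetaTerm, ← neg_mul, ← neg_div, mul_zpow, div_zpow, zpow_add₀ hp0,
    zpow_add₀ (neg_ne_zero.mpr hx), zpow_sub₀ hy]
  ring

lemma thetaTerm_add_mul_thetaTerm_sub (hp0 : p ≠ 0) (hx : x ≠ 0) (hy : y ≠ 0) (a b : ℤ) :
    thetaTerm p (x * y) (a + b) * thetaTerm p (x / y) (a - b) =
      thetaTerm (p ^ 2) (-x ^ 2) a * thetaTerm (p ^ 2) (-(p * y ^ 2)) b := by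
  have hexp : (a + b) * (a + b - 1) / 2 + (a - b) * (a - b - 1) / 2 = a * (a - 1) + b * b := by
    linarith [two_mul_triangle (a + b), two_mul_triangle (a - b)]
  rw [thetaTerm_mul_thetaTerm hp0 hx hy, hexp, show a + b + (a - b) = 2 * a by ring,
    show a + b - (a - b) = 2 * b by ring, (even_two_mul a).neg_zpow, zpow_add₀ hp0,
    thetaTerm_sq_neg_sq, thetaTerm_sq_neg_mul_sq hp0]
  ring

lemma thetaTerm_add_mul_thetaTerm_sub_add_one (hp0 : p ≠ 0) (hx : x ≠ 0) (hy : y ≠ 0) (a b : ℤ) :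
    thetaTerm p (x * y) (a + b) * thetaTerm p (x / y) (a - b + 1) =
      -(x / y) * (thetaTerm (p ^ 2) (-(p * x ^ 2)) a * thetaTerm (p ^ 2) (-y ^ 2) b) := by
  have hexp : (a + b) * (a + b - 1) / 2 + (a - b + 1) * (a - b + 1 - 1) / 2 =
      a * a + b * (b - 1) := by
    linarith [two_mul_triangle (a + b), two_mul_triangle (a - b + 1)]
  rw [thetaTerm_mul_thetaTerm hp0 hx hy, hexp, show a + b + (a - b + 1) = 2 * a + 1 by ring,
    show a + b - (a - b + 1) = 2 * b - 1 by ring, zpow_add_one₀ (neg_ne_zero.mpr hx),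
    (even_two_mul a).neg_zpow, zpow_sub_one₀ hy, zpow_add₀ hp0, thetaTerm_sq_neg_sq,
    thetaTerm_sq_neg_mul_sq hp0]
  ring

lemma summable_norm_thetaTerm (hp : ‖p‖ < 1) (hp0 : p ≠ 0) (hx : x ≠ 0) :
    Summable fun n : ℤ => ‖thetaTerm p x n‖ := by
  have hnat {z : ℂ} (hz : z ≠ 0) : Summable fun n : ℕ => ‖thetaTerm p z n‖ := by
    have hne (n : ℕ) : thetaTerm p z n ≠ 0 :=
      mul_ne_zero (zpow_ne_zero _ hp0) (zpow_ne_zero _ (neg_ne_zero.mpr hz))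
    refine summable_of_ratio_test_tendsto_lt_one zero_lt_one
      (.of_forall fun n => norm_ne_zero_iff.mpr (hne n)) ?_
    have hlim : Tendsto (fun n : ℕ => ‖z‖ * ‖p‖ ^ n) atTop (𝓝 (‖z‖ * 0)) :=
      (tendsto_pow_atTop_nhds_zero_of_lt_one (norm_nonneg _) hp).const_mul _
    rw [mul_zero] at hlim
    refine hlim.congr fun n => ?_
    rw [Nat.cast_succ, thetaTerm_add_one hp0 hz, norm_norm, norm_norm, norm_mul,
      mul_div_cancel_right₀ _ (norm_ne_zero_iff.mpr (hne n)), norm_mul, norm_neg, zpow_natCast,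
      norm_pow]
  refine Summable.of_nat_of_neg (hnat hx) ?_
  simpa only [thetaTerm_neg hp0] using hnat (div_ne_zero hp0 hx)

lemma hasSum_thetaTerm (hp : ‖p‖ < 1) (hp0 : p ≠ 0) (hx : x ≠ 0) :
    HasSum (thetaTerm p x) (thetaSeries p x) :=
  (summable_norm_thetaTerm hp hp0 hx).of_norm.hasSum

lemma hasSum_gaussBinom_mul_thetaTerm_succ (hp : ‖p‖ < 1) (hp0 : p ≠ 0) (hx : x ≠ 0)
    {m n : ℕ} {s : ℂ}
    (hs : HasSum (fun j : ℤ => gaussBinom p (m + n) (n + j) * thetaTerm p x j) s) :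
    HasSum (fun j : ℤ => gaussBinom p (m + 1 + n) (n + j) * thetaTerm p x j)
      (s * (1 - x * p ^ m)) := by
  have hshift := ((Equiv.subRight (1 : ℤ)).hasSum_iff.mpr hs).mul_left (x * p ^ m)
  rw [show s * (1 - x * p ^ m) = s - x * p ^ m * s by ring]
  refine (hs.sub hshift).congr_fun fun j => ?_
  have hterm : thetaTerm p x j = -x * p ^ (j - 1) * thetaTerm p x (j - 1) := by
    simpa using thetaTerm_add_one hp0 hx (j - 1)
  have hpow : p ^ m = p ^ (m + 1 - j : ℤ) * p ^ (j - 1) := by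
    rw [← zpow_add₀ hp0, ← zpow_natCast]
    congr 1
    ring
  rw [add_right_comm m 1 n, gaussBinom_succ hp hp0, Function.comp_apply, Equiv.subRight_apply,
    show ((m + n : ℕ) + 1 - (n + j) : ℤ) = m + 1 - j by push_cast; ring, ← add_sub_assoc, hpow]
  linear_combination p ^ (m + 1 - j : ℤ) * gaussBinom p (m + n) (n + j - 1) * hterm

lemma hasSum_gaussBinom_mul_thetaTerm_neg (hp0 : p ≠ 0) {m n : ℕ} {s : ℂ}
    (hs : HasSum (fun j : ℤ => gaussBinom p (m + n) (n + j) * thetaTerm p x j) s) :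
    HasSum (fun j : ℤ => gaussBinom p (n + m) (m + j) * thetaTerm p (p / x) j) s := by
  refine ((Equiv.neg ℤ).hasSum_iff.mpr hs).congr_fun fun j => ?_
  rw [Function.comp_apply, Equiv.neg_apply, thetaTerm_neg hp0, ← gaussBinom_symm, add_comm n m,
    show ((m + n : ℕ) - (m + j) : ℤ) = n + -j by push_cast; ring]

theorem hasSum_finite_jacobi_triple_product (hp : ‖p‖ < 1) (hp0 : p ≠ 0) (hx : x ≠ 0) (m n : ℕ) :
    HasSum (fun j : ℤ => gaussBinom p (m + n) (n + j) * thetaTerm p x j)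
      (finiteQPoch x p m * finiteQPoch (p / x) p n) := by
  -- Pascal's rule adds the factors of `(x; p)_m`; the symmetry `x ↦ p / x`, `j ↦ -j` turns it into
  -- the step that adds the factors of `(p / x; p)_n`.
  have hzero :
      HasSum (fun j : ℤ => gaussBinom p (0 + 0) ((0 : ℕ) + j) * thetaTerm p (p / x) j) 1 := by
    convert hasSum_ite_eq (0 : ℤ) (1 : ℂ) using 2 with j
    simp +contextual [gaussBinom_zero, thetaTerm_zero, ite_mul]
  have hpx : p / x ≠ 0 := div_ne_zero hp0 hx
  have hleft : HasSum (fun j : ℤ => gaussBinom p (n + 0) ((0 : ℕ) + j) * thetaTerm p (p / x) j)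
      (finiteQPoch (p / x) p n) := by
    induction n with
    | zero => simpa [finiteQPoch] using hzero
    | succ n ih =>
      rw [finiteQPoch_succ]
      exact hasSum_gaussBinom_mul_thetaTerm_succ hp hp0 hpx ih
  induction m with
  | zero =>
    simpa [finiteQPoch, div_div_cancel₀ hp0] using
      hasSum_gaussBinom_mul_thetaTerm_neg hp0 hleft
  | succ m ih =>
    rw [finiteQPoch_succ, mul_right_comm]
    exact hasSum_gaussBinom_mul_thetaTerm_succ hp hp0 hx ih

theorem jacobi_triple_product (hp : ‖p‖ < 1) (hp0 : p ≠ 0) (hx : x ≠ 0) :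
    thetaSeries p x = qPoch p p * modTheta p x := by
  have hL := qPoch_ne_zero hp hp
  obtain ⟨C, hC⟩ := exists_norm_gaussBinom_le hp
  have hseries : Tendsto
      (fun n : ℕ => ∑' j : ℤ, gaussBinom p (n + n) (n + j) * thetaTerm p x j) atTop
      (𝓝 (∑' j : ℤ, (qPoch p p)⁻¹ * thetaTerm p x j)) := by
    refine tendsto_tsum_of_dominated_convergence
      ((summable_norm_thetaTerm hp hp0 hx).mul_left C)
      (fun j => (tendsto_gaussBinom_add_self hp j).mul_const _) (.of_forall fun n j => ?_)
    rw [norm_mul]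
    gcongr
    exact hC _ _
  have hprod : Tendsto (fun n => finiteQPoch x p n * finiteQPoch (p / x) p n) atTop
      (𝓝 (modTheta p x)) :=
    (tendsto_finiteQPoch x hp).mul (tendsto_finiteQPoch (p / x) hp)
  simp only [(hasSum_finite_jacobi_triple_product hp hp0 hx _ _).tsum_eq, tsum_mul_left] at hseries
  rw [tendsto_nhds_unique hprod hseries, mul_inv_cancel_left₀ hL, thetaSeries]

lemma hasSum_of_parity_classes {M : Type*} [AddCommMonoid M] [TopologicalSpace M]
    [ContinuousAdd M] {f : ℤ × ℤ → M} {A B : M}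
    (heven : HasSum (fun z : ℤ × ℤ => f (z.1 + z.2, z.1 - z.2)) A)
    (hodd : HasSum (fun z : ℤ × ℤ => f (z.1 + z.2, z.1 - z.2 + 1)) B) : HasSum f (A + B) := by
  let even (z : ℤ × ℤ) : ℤ × ℤ := (z.1 + z.2, z.1 - z.2)
  let odd (z : ℤ × ℤ) : ℤ × ℤ := (z.1 + z.2, z.1 - z.2 + 1)
  have even_injective : even.Injective := fun z w h => by grind
  have odd_injective : odd.Injective := fun z w h => by grind
  have mem_even (z : ℤ × ℤ) : z ∈ Set.range even ↔ Even (z.1 + z.2) := by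
    refine ⟨fun ⟨w, hw⟩ => ⟨w.1, by grind⟩, fun ⟨k, hk⟩ => ⟨(k, z.1 - k), by grind⟩⟩
  have mem_odd (z : ℤ × ℤ) : z ∈ Set.range odd ↔ Odd (z.1 + z.2) := by
    refine ⟨fun ⟨w, hw⟩ => ⟨w.1, by grind⟩, fun ⟨k, hk⟩ => ⟨(k, z.1 - k), by grind⟩⟩
  have odd_eq_compl : Set.range odd = (Set.range even)ᶜ := by
    ext z
    rw [Set.mem_compl_iff, mem_even, mem_odd, Int.not_even_iff_odd]
  have hcompl : IsCompl (Set.range even) (Set.range odd) := odd_eq_compl ▸ isCompl_compl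
  exact HasSum.add_isCompl hcompl (even_injective.hasSum_range_iff.mpr heven)
    (odd_injective.hasSum_range_iff.mpr hodd)

lemma hasSum_thetaTerm_mul_thetaTerm (hp : ‖p‖ < 1) (hp0 : p ≠ 0) (hx : x ≠ 0) (hy : y ≠ 0) :
    HasSum (fun z : ℤ × ℤ => thetaTerm p x z.1 * thetaTerm p y z.2)
      (thetaSeries p x * thetaSeries p y) :=
  (hasSum_thetaTerm hp hp0 hx).mul (hasSum_thetaTerm hp hp0 hy)
    (summable_mul_of_summable_norm (summable_norm_thetaTerm hp hp0 hx)
      (summable_norm_thetaTerm hp hp0 hy))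

theorem thetaSeries_mul_mul_thetaSeries_div (hp : ‖p‖ < 1) (hp0 : p ≠ 0) (hx : x ≠ 0)
    (hy : y ≠ 0) :
    thetaSeries p (x * y) * thetaSeries p (x / y) =
      thetaSeries (p ^ 2) (-x ^ 2) * thetaSeries (p ^ 2) (-(p * y ^ 2)) -
        x / y * (thetaSeries (p ^ 2) (-(p * x ^ 2)) * thetaSeries (p ^ 2) (-y ^ 2)) := by
  have hp2 : ‖p ^ 2‖ < 1 := norm_pow_lt_one hp two_ne_zero
  have hp20 : p ^ 2 ≠ 0 := pow_ne_zero 2 hp0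
  have hneg_sq {z : ℂ} (hz : z ≠ 0) : -z ^ 2 ≠ 0 := neg_ne_zero.mpr (pow_ne_zero 2 hz)
  have hneg_mul_sq {z : ℂ} (hz : z ≠ 0) : -(p * z ^ 2) ≠ 0 :=
    neg_ne_zero.mpr (mul_ne_zero hp0 (pow_ne_zero 2 hz))
  have heven := hasSum_thetaTerm_mul_thetaTerm hp2 hp20 (hneg_sq hx) (hneg_mul_sq hy)
  have hodd := (hasSum_thetaTerm_mul_thetaTerm hp2 hp20 (hneg_mul_sq hx) (hneg_sq hy)).mul_left
    (-(x / y))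
  simp only [← thetaTerm_add_mul_thetaTerm_sub hp0 hx hy] at heven
  simp only [← thetaTerm_add_mul_thetaTerm_sub_add_one hp0 hx hy] at hodd
  rw [(hasSum_thetaTerm_mul_thetaTerm hp hp0 (mul_ne_zero hx hy) (div_ne_zero hx hy)).unique
    (hasSum_of_parity_classes heven hodd)]
  ring

theorem thetaSeries_weierstrass (hp : ‖p‖ < 1) (hp0 : p ≠ 0) (hx : x ≠ 0) (hy : y ≠ 0)
    (hu : u ≠ 0) (hv : v ≠ 0) :
    thetaSeries p (x * y) * thetaSeries p (x / y) *
        (thetaSeries p (u * v) * thetaSeries p (u / v)) =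
      thetaSeries p (x * v) * thetaSeries p (x / v) *
          (thetaSeries p (u * y) * thetaSeries p (u / y)) +
        u / y * (thetaSeries p (y * v) * thetaSeries p (y / v) *
          (thetaSeries p (x * u) * thetaSeries p (x / u))) := by
  simp only [thetaSeries_mul_mul_thetaSeries_div hp hp0, hx, hy, hu, hv, ne_eq, not_false_eq_true]
  field

theorem modTheta_weierstrass (hp : ‖p‖ < 1) (hp0 : p ≠ 0) (hx : x ≠ 0) (hy : y ≠ 0)
    (hu : u ≠ 0) (hv : v ≠ 0) :
    modTheta p (x * y) * modTheta p (x / y) * (modTheta p (u * v) * modTheta p (u / v)) =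
      modTheta p (x * v) * modTheta p (x / v) * (modTheta p (u * y) * modTheta p (u / y)) +
        u / y * (modTheta p (y * v) * modTheta p (y / v) *
          (modTheta p (x * u) * modTheta p (x / u))) := by
  have hweier := thetaSeries_weierstrass hp hp0 hx hy hu hv
  simp only [jacobi_triple_product hp hp0, mul_ne_zero, div_ne_zero, hx, hy, hu, hv, ne_eq,
    not_false_eq_true] at hweier
  refine mul_left_cancel₀ (pow_ne_zero 4 (qPoch_ne_zero hp hp)) ?_
  linear_combination hweier

end Theta

section CubicTheta

variable {q : ℂ}

lemma modTheta_pow_pow (q : ℂ) {i n : ℕ} (hi : i < n) :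
    modTheta (q ^ n) (q ^ i) = qPoch (q ^ i) (q ^ n) * qPoch (q ^ (n - i)) (q ^ n) := by
  rw [modTheta, pow_sub_of_lt q hi, div_eq_mul_inv]

lemma modTheta_pow_sub (q : ℂ) {i n : ℕ} (hi0 : 0 < i) (hi : i < n) :
    modTheta (q ^ n) (q ^ (n - i)) = modTheta (q ^ n) (q ^ i) := by
  rw [modTheta_pow_pow q hi, modTheta_pow_pow q (Nat.sub_lt_self hi0 hi.le),
    Nat.sub_sub_self hi.le, mul_comm]

lemma modTheta_pow_ne_zero (hq : ‖q‖ < 1) {i n : ℕ} (hi0 : i ≠ 0) (hi : i < n) :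
    modTheta (q ^ n) (q ^ i) ≠ 0 := by
  have hqn := norm_pow_lt_one hq (Nat.ne_zero_of_lt hi)
  rw [modTheta_pow_pow q hi]
  exact mul_ne_zero (qPoch_ne_zero (norm_pow_lt_one hq hi0) hqn)
    (qPoch_ne_zero (norm_pow_lt_one hq (Nat.sub_ne_zero_of_lt hi)) hqn)

lemma qPoch_self_eq_prod (hq : ‖q‖ < 1) {n : ℕ} (hn : n ≠ 0) :
    qPoch q q = ∏ i ∈ range n, qPoch (q ^ (i + 1)) (q ^ n) := by
  simp only [qPoch_eq_prod q hq hn, pow_succ']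

lemma qPoch_self_eq_prod_modTheta (hq : ‖q‖ < 1) (k d : ℕ) :
    qPoch q q = (∏ i ∈ range k, modTheta (q ^ (k + d + k + 1)) (q ^ (i + 1))) *
      (∏ i ∈ range d, qPoch (q ^ (k + i + 1)) (q ^ (k + d + k + 1))) *
        qPoch (q ^ (k + d + k + 1)) (q ^ (k + d + k + 1)) := by
  set n := k + d + k + 1 with hn
  have hreflect : ∏ i ∈ range k, qPoch (q ^ (k + d + i + 1)) (q ^ n) =
      ∏ i ∈ range k, qPoch (q ^ (n - (i + 1))) (q ^ n) := by
    rw [← prod_range_reflect]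
    refine prod_congr rfl fun i hi => ?_
    congr 2
    grind
  have htheta : ∏ i ∈ range k, modTheta (q ^ n) (q ^ (i + 1)) =
      (∏ i ∈ range k, qPoch (q ^ (i + 1)) (q ^ n)) *
        ∏ i ∈ range k, qPoch (q ^ (n - (i + 1))) (q ^ n) := by
    rw [← prod_mul_distrib]
    exact prod_congr rfl fun i hi => modTheta_pow_pow q (by grind)
  rw [qPoch_self_eq_prod hq (Nat.succ_ne_zero (k + d + k)), prod_range_succ, prod_range_add,
    prod_range_add, ← hn, hreflect, htheta, mul_right_comm (∏ i ∈ range k, _)]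

lemma qPoch_self_odd (hq : ‖q‖ < 1) (k : ℕ) :
    qPoch q q = (∏ i ∈ range k, modTheta (q ^ (2 * k + 1)) (q ^ (i + 1))) *
      qPoch (q ^ (2 * k + 1)) (q ^ (2 * k + 1)) := by
  simpa [two_mul] using qPoch_self_eq_prod_modTheta hq k 0

lemma qPoch_self_eq_mul_qPoch_sq (hq : ‖q‖ < 1) :
    qPoch q q = qPoch q (q ^ 2) * qPoch (q ^ 2) (q ^ 2) := by
  simpa [prod_range_succ] using qPoch_self_eq_prod hq two_ne_zero

lemma qPoch_self_even (hq : ‖q‖ < 1) (k : ℕ) :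
    qPoch q q = (∏ i ∈ range k, modTheta (q ^ (2 * (k + 1))) (q ^ (i + 1))) *
      qPoch (q ^ (k + 1)) (q ^ (k + 1)) := by
  have hprod := qPoch_self_eq_prod_modTheta hq k 1
  rw [prod_range_one, add_zero, show k + 1 + k + 1 = 2 * (k + 1) by ring] at hprod
  rw [hprod, qPoch_self_eq_mul_qPoch_sq (norm_pow_lt_one hq k.succ_ne_zero), ← pow_mul',
    mul_assoc]

lemma modTheta_sq_self_mul_qPoch_sq (hq : ‖q‖ < 1) :
    modTheta (q ^ 2) q * qPoch (q ^ 2) (q ^ 2) ^ 2 = qPoch q q ^ 2 := by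
  have htheta : modTheta (q ^ 2) q = qPoch q (q ^ 2) * qPoch q (q ^ 2) := by
    simpa using modTheta_pow_pow q one_lt_two
  rw [htheta, qPoch_self_eq_mul_qPoch_sq hq]
  ring

lemma c_eq_div_modTheta_cube (hq : ‖q‖ < 1) :
    c q = 3 * qPoch (q ^ 3) (q ^ 3) ^ 2 / modTheta (q ^ 3) q := by
  have hE : qPoch q q = modTheta (q ^ 3) q * qPoch (q ^ 3) (q ^ 3) := by
    simpa using qPoch_self_odd hq 1
  have hq3 := norm_pow_lt_one hq three_ne_zero
  have hE3 := qPoch_ne_zero hq3 hq3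
  rw [c, hE]
  field

lemma c_eq_div_modTheta_pow_twelve (hq : ‖q‖ < 1) :
    c q = 3 * modTheta (q ^ 12) (q ^ 3) ^ 2 * qPoch (q ^ 6) (q ^ 6) ^ 2 /
      (modTheta (q ^ 12) q * modTheta (q ^ 12) (q ^ 2) * modTheta (q ^ 12) (q ^ 4) *
        modTheta (q ^ 12) (q ^ 5)) := by
  have hE : qPoch q q = modTheta (q ^ 12) q * modTheta (q ^ 12) (q ^ 2) *
      modTheta (q ^ 12) (q ^ 3) * modTheta (q ^ 12) (q ^ 4) * modTheta (q ^ 12) (q ^ 5) *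
        qPoch (q ^ 6) (q ^ 6) := by
    simpa [prod_range_succ] using qPoch_self_even hq 5
  have hE3 : qPoch (q ^ 3) (q ^ 3) = modTheta (q ^ 12) (q ^ 3) * qPoch (q ^ 6) (q ^ 6) := by
    simpa [← pow_mul] using qPoch_self_even (norm_pow_lt_one hq three_ne_zero) 1
  have hq6 := norm_pow_lt_one hq (n := 6) (by norm_num)
  have hE6 := qPoch_ne_zero hq6 hq6
  have hθ3 := modTheta_pow_ne_zero hq three_ne_zero (show 3 < 12 by norm_num)
  rw [c, hE, hE3]
  field

lemma qPoch_quotient_eq_modTheta (hq : ‖q‖ < 1) :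
    qPoch (q ^ 2) (q ^ 2) ^ 3 * qPoch (q ^ 3) (q ^ 3) ^ 2 /
        (qPoch q q ^ 2 * qPoch (q ^ 6) (q ^ 6)) =
      modTheta (q ^ 6) (q ^ 2) * qPoch (q ^ 6) (q ^ 6) ^ 2 / modTheta (q ^ 6) q ^ 2 := by
  have hE : qPoch q q = modTheta (q ^ 6) q * modTheta (q ^ 6) (q ^ 2) * qPoch (q ^ 3) (q ^ 3) := by
    simpa [prod_range_succ] using qPoch_self_even hq 2
  have hE2 : qPoch (q ^ 2) (q ^ 2) = modTheta (q ^ 6) (q ^ 2) * qPoch (q ^ 6) (q ^ 6) := by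
    simpa [← pow_mul] using qPoch_self_odd (norm_pow_lt_one hq two_ne_zero) 1
  have hq3 := norm_pow_lt_one hq three_ne_zero
  have hq6 := norm_pow_lt_one hq (n := 6) (by norm_num)
  have hE3 := qPoch_ne_zero hq3 hq3
  have hE6 := qPoch_ne_zero hq6 hq6
  have hθ2 := modTheta_pow_ne_zero hq two_ne_zero (show 2 < 6 by norm_num)
  rw [hE, hE2]
  field

lemma modTheta_pow_twelve_relation (hq : ‖q‖ < 1) :
    modTheta (q ^ 12) (q ^ 2) * modTheta (q ^ 12) (q ^ 3) ^ 2 * modTheta (q ^ 12) (q ^ 6) =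
      modTheta (q ^ 12) q * modTheta (q ^ 12) (q ^ 5) *
        (modTheta (q ^ 12) (q ^ 4) ^ 2 + q * modTheta (q ^ 12) (q ^ 2) ^ 2) := by
  rcases eq_or_ne q 0 with rfl | hq0
  · simp [modTheta, qPoch]
  have hweier := modTheta_weierstrass (norm_pow_lt_one hq (n := 12) (by norm_num))
    (pow_ne_zero 12 hq0) (pow_ne_zero 4 hq0) (pow_ne_zero 2 hq0) (pow_ne_zero 3 hq0) one_ne_zero
  have hθ7 : modTheta (q ^ 12) (q ^ 7) = modTheta (q ^ 12) (q ^ 5) :=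
    modTheta_pow_sub q (i := 5) (by norm_num) (by norm_num)
  have hquot4 : q ^ 4 / q ^ 2 = q ^ 2 := by field
  have hquot3 : q ^ 3 / q ^ 2 = q := by field
  have hquot1 : q ^ 4 / q ^ 3 = q := by field
  simp only [hquot4, hquot3, hquot1, mul_one, div_one, ← pow_add, Nat.reduceAdd, hθ7] at hweier
  linear_combination hweier

theorem c_two_dissection (hq : ‖q‖ < 1) :
    c q = q * c (q ^ 4) + 3 * (qPoch (q ^ 4) (q ^ 4) ^ 3 * qPoch (q ^ 6) (q ^ 6) ^ 2 /
      (qPoch (q ^ 2) (q ^ 2) ^ 2 * qPoch (q ^ 12) (q ^ 12))) := by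
  have hc4 := c_eq_div_modTheta_cube (norm_pow_lt_one hq four_ne_zero)
  have hquot := qPoch_quotient_eq_modTheta (norm_pow_lt_one hq two_ne_zero)
  have hθ6 := modTheta_sq_self_mul_qPoch_sq (norm_pow_lt_one hq (n := 6) (by norm_num))
  simp only [← pow_mul, Nat.reduceMul] at hc4 hquot hθ6
  have hθ {i : ℕ} (hi0 : i ≠ 0) (hi : i < 12) := modTheta_pow_ne_zero hq hi0 hi
  have hθ1 := pow_one q ▸ hθ one_ne_zero (by norm_num)
  have hθ2 := hθ two_ne_zero (by norm_num)
  have hθ4 := hθ four_ne_zero (by norm_num)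
  have hθ5 := hθ (i := 5) (by norm_num) (by norm_num)
  rw [c_eq_div_modTheta_pow_twelve hq, hc4, hquot, ← hθ6]
  field_simp
  linear_combination qPoch (q ^ 12) (q ^ 12) ^ 2 * modTheta_pow_twelve_relation hq

end CubicTheta

theorem c_sq_two_dissection (q : ℂ) (hq : ‖q‖ < 1) :
    c q ^ 2 =
      (q ^ 2 * c (q ^ 4) ^ 2 +
          9 * qPoch (q ^ 4) (q ^ 4) ^ 6 * qPoch (q ^ 6) (q ^ 6) ^ 4 /
            (qPoch (q ^ 2) (q ^ 2) ^ 4 * qPoch (q ^ 12) (q ^ 12) ^ 2)) +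
        6 * q * c (q ^ 4) * qPoch (q ^ 4) (q ^ 4) ^ 3 * qPoch (q ^ 6) (q ^ 6) ^ 2 /
          (qPoch (q ^ 2) (q ^ 2) ^ 2 * qPoch (q ^ 12) (q ^ 12)) := by
  rw [c_two_dissection hq]
  ring
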